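/- arXiv:2302.14658 — 3 statements merged into one kernel-verified Lean document; each statement's English description precedes it below -/
import Mathlib

section
/- Define G(x) = −∫_{−∞}^{x} sin²(πu)/(π²·u·(u+1)²) du for x ∈ ℝ, where the integrand extends continuously across u = 0 and u = −1. Then G(x) ≥ x_+^0 for all x ∈ ℝ, where x_+^0 is the Heaviside function, and ∫_{−∞}^{∞} (G(x) − x_+^0) dx = 1. -/
open MeasureTheory Real Set

/-- The (upper semi-continuous) Heaviside function `x₊⁰`. -/
noncomputable def heaviside (x : ℝ) : ℝ := if 0 ≤ x then 1 else 0

lemma coeff_aux (u : ℝ) (n : ℤ) :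
    fourierCoeffOn (a := -(1/2)) (b := 1/2) (by norm_num)
      (fun x : ℝ => Complex.exp (((2 * π * u * x : ℝ) : ℂ) * Complex.I)) n
      = (sinc (π * (u - n)) : ℝ) := by
  rw [fourierCoeffOn_eq_integral]
  have e : ∀ x : ℝ, (fourier (-n) (x : AddCircle ((1/2 : ℝ) - -(1/2)))) •
      Complex.exp (((2 * π * u * x : ℝ) : ℂ) * Complex.I)
      = Complex.exp (((2 * π * (u - n)) * x : ℝ) * Complex.I) := by
    intro x
    rw [fourier_coe_apply, smul_eq_mul, ← Complex.exp_add]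
    congr 1
    push_cast
    ring
  simp_rw [e]
  by_cases h : u - n = 0
  · simp [h]; norm_num
  have h2 : 2 * π * (u - n) ≠ 0 := mul_ne_zero (by positivity) h
  have := intervalIntegral.integral_comp_mul_left (a := -(1/2)) (b := 1/2)
    (fun t : ℝ => Complex.exp ((t : ℂ) * Complex.I)) h2
  rw [this]
  have e1 : 2 * π * (u - n) * (-(1/2)) = - (π * (u - n)) := by ring
  have e2 : 2 * π * (u - n) * ((1/2)) = (π * (u - n)) := by ring
  rw [e1, e2, integral_exp_mul_I_eq_sinc, smul_smul, Complex.real_smul]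
  have h3 : ((u:ℂ) - n) ≠ 0 := by exact_mod_cast h
  have h4 : (π : ℂ) ≠ 0 := by exact_mod_cast pi_ne_zero
  push_cast
  field_simp
  norm_num

lemma hasSum_sinc (u : ℝ) : HasSum (fun n : ℤ => sinc (π * (u + n)) ^ 2) 1 := by
  have hf : Continuous (fun x : ℝ => Complex.exp (((2 * π * u * x : ℝ) : ℂ) * Complex.I)) := by
    fun_prop
  have := hasSum_sq_fourierCoeffOn (a := -(1/2)) (b := 1/2)
    (f := (fun x : ℝ => Complex.exp (((2 * π * u * x : ℝ) : ℂ) * Complex.I))) (by norm_num)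
    (MemLp.of_bound hf.aestronglyMeasurable 1 (by
      refine Filter.Eventually.of_forall fun x => ?_
      rw [Complex.norm_exp_ofReal_mul_I]))
  simp only [coeff_aux, Complex.norm_exp_ofReal_mul_I, Complex.norm_real, Real.norm_eq_abs,
    sq_abs] at this
  rw [← (Equiv.neg ℤ).hasSum_iff] at this
  convert this using 1
  · ext n; simp
  · norm_num

lemma lintegral_sinc : ∫⁻ u : ℝ, ENNReal.ofReal (sinc (π * u) ^ 2) = 1 := by
  have hm : Measurable fun u : ℝ => ENNReal.ofReal (sinc (π * u) ^ 2) := by fun_prop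
  rw [← setLIntegral_univ, ← iUnion_Ioc_add_intCast (0:ℝ),
    lintegral_iUnion (fun i => measurableSet_Ioc) (pairwise_disjoint_Ioc_add_intCast 0)]
  have : ∀ n : ℤ, ∫⁻ u in Ioc ((0:ℝ) + n) (0 + n + 1), ENNReal.ofReal (sinc (π * u) ^ 2)
      = ∫⁻ u in Ioc (0:ℝ) 1, ENNReal.ofReal (sinc (π * (u + n)) ^ 2) := by
    intro n
    rw [← (measurePreserving_add_right volume (n:ℝ)).setLIntegral_comp_preimage measurableSet_Ioc hm]
    simp
  simp_rw [this]
  rw [← lintegral_tsum (fun n => by fun_prop)]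
  have : ∀ u : ℝ, ∑' n : ℤ, ENNReal.ofReal (sinc (π * (u + n)) ^ 2) = 1 := by
    intro u
    rw [← ENNReal.ofReal_tsum_of_nonneg (fun _ => sq_nonneg _) (hasSum_sinc u).summable,
      (hasSum_sinc u).tsum_eq, ENNReal.ofReal_one]
  simp [this]

lemma integrable_sinc_sq : Integrable (fun u : ℝ => sinc (π * u) ^ 2) := by
  refine ⟨by fun_prop, ?_⟩
  rw [hasFiniteIntegral_iff_ofReal (Filter.Eventually.of_forall fun _ => sq_nonneg _),
    lintegral_sinc]
  simp

lemma integral_sinc_sq : ∫ u : ℝ, sinc (π * u) ^ 2 = 1 := by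
  rw [integral_eq_lintegral_of_nonneg_ae (Filter.Eventually.of_forall fun _ => sq_nonneg _)
    (by fun_prop), lintegral_sinc]
  simp

lemma dense_aux : Dense ({0, -1}ᶜ : Set ℝ) :=
  Set.Countable.dense_compl ℝ (Set.toFinite ({0, -1} : Set ℝ)).countable

/-- `sin²(πu)/(π²u)`, extended continuously. -/
noncomputable def fAux (u : ℝ) : ℝ := sinc (π * u) * sin (π * u) / π

lemma fAux_cont : Continuous fAux := by unfold fAux; fun_prop

lemma fAux_bound (u c : ℝ) (hc : 0 < c) (h : c ≤ |u|) : ‖fAux u‖ ≤ 1 / c := by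
  have hu : 0 < |u| := hc.trans_le h
  have hu0 : u ≠ 0 := abs_pos.mp hu
  unfold fAux
  rw [sinc_of_ne_zero (mul_ne_zero pi_ne_zero hu0), Real.norm_eq_abs, abs_div, abs_mul, abs_div,
    abs_mul, abs_of_pos pi_pos]
  have hs := abs_sin_le_one (π * u)
  have hp : 1 ≤ π := by linarith [pi_gt_three]
  have h0 := abs_nonneg (sin (π * u))
  calc |sin (π * u)| / (π * |u|) * |sin (π * u)| / π ≤ 1 / (1 * c) * 1 / 1 := by gcongr
    _ = 1 / c := by ring

lemma h_eq (h : ℝ → ℝ) (hc : Continuous h)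
    (heq : ∀ u : ℝ, u ≠ 0 → u ≠ -1 →
      h u = Real.sin (π * u) ^ 2 / (π ^ 2 * u * (u + 1) ^ 2)) (u : ℝ) :
    h u = (fAux u - fAux (u + 1)) - sinc (π * (u + 1)) ^ 2 := by
  have hf := fAux_cont
  refine congrFun (g := fun u => (fAux u - fAux (u + 1)) - sinc (π * (u + 1)) ^ 2)
    (Continuous.ext_on dense_aux hc (by fun_prop) ?_) u
  intro u hu
  simp only [mem_compl_iff, mem_insert_iff, mem_singleton_iff, not_or] at hu
  have h1 : u + 1 ≠ 0 := fun h => hu.2 (by linarith)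
  have h0 := hu.1
  have hp := pi_ne_zero
  have hs : sin (π * (u + 1)) = - sin (π * u) := by rw [mul_add, mul_one, sin_add_pi]
  simp only [fAux]
  rw [heq u hu.1 hu.2, sinc_of_ne_zero (mul_ne_zero hp h0), sinc_of_ne_zero (mul_ne_zero hp h1), hs]
  field_simp
  ring

lemma uh_eq (h : ℝ → ℝ) (hc : Continuous h)
    (heq : ∀ u : ℝ, u ≠ 0 → u ≠ -1 →
      h u = Real.sin (π * u) ^ 2 / (π ^ 2 * u * (u + 1) ^ 2)) (u : ℝ) :
    u * h u = sinc (π * (u + 1)) ^ 2 := by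
  refine congrFun (f := fun u => u * h u) (g := fun u => sinc (π * (u + 1)) ^ 2)
    (Continuous.ext_on dense_aux (by fun_prop) (by fun_prop) ?_) u
  intro u hu
  simp only [mem_compl_iff, mem_insert_iff, mem_singleton_iff, not_or] at hu
  have h1 : u + 1 ≠ 0 := fun h => hu.2 (by linarith)
  have h0 := hu.1
  have hp := pi_ne_zero
  have hs : sin (π * (u + 1)) = - sin (π * u) := by rw [mul_add, mul_one, sin_add_pi]
  simp only
  rw [heq u hu.1 hu.2, sinc_of_ne_zero (mul_ne_zero hp h1), hs]
  field_simp

lemma integrable_shift : Integrable (fun u : ℝ => sinc (π * (u + 1)) ^ 2) :=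
  integrable_sinc_sq.comp_add_right 1

lemma integral_shift : ∫ u : ℝ, sinc (π * (u + 1)) ^ 2 = 1 := by
  exact (integral_add_right_eq_self (μ := volume) (fun u : ℝ => sinc (π * u) ^ 2) 1).trans
    integral_sinc_sq

lemma h_integrable (h : ℝ → ℝ) (hc : Continuous h)
    (huh : ∀ u, u * h u = sinc (π * (u + 1)) ^ 2) : Integrable h := by
  have h1 : IntegrableOn h (Icc (-1) 1) := hc.continuousOn.integrableOn_compact isCompact_Icc
  have h2 : IntegrableOn h (Icc (-1) 1)ᶜ := by
    refine Integrable.mono' (integrable_shift.integrableOn) hc.aestronglyMeasurable ?_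
    refine (ae_restrict_iff' measurableSet_Icc.compl).2 (Filter.Eventually.of_forall fun u hu => ?_)
    have hu1 : 1 ≤ |u| := by
      by_contra hh
      exact hu (abs_le.mp (not_le.mp hh).le)
    rw [← abs_of_nonneg (sq_nonneg (sinc (π * (u + 1)))), ← huh, abs_mul, Real.norm_eq_abs]
    nlinarith [abs_nonneg (h u)]
  rw [← integrableOn_univ, ← union_compl_self (Icc (-1:ℝ) 1)]
  exact h1.union h2

lemma fdiff_integral (hi : Integrable (fun u => fAux u - fAux (u + 1))) :
    ∫ u, (fAux u - fAux (u + 1)) = 0 := by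
  have hii : ∀ a b, IntervalIntegrable fAux volume a b := fun a b => fAux_cont.intervalIntegrable a b
  have hA : Filter.Tendsto (fun n : ℕ => (n : ℝ) + 2) Filter.atTop Filter.atTop :=
    Filter.tendsto_atTop_add_const_right _ _ tendsto_natCast_atTop_atTop
  have hT := intervalIntegral_tendsto_integral hi (Filter.tendsto_neg_atTop_atBot.comp hA) hA
  refine tendsto_nhds_unique hT ?_
  have h0 := (tendsto_one_div_add_atTop_nhds_zero_nat (𝕜 := ℝ)).const_mul 2
  rw [mul_zero] at h0
  refine squeeze_zero_norm (fun n => ?_) h0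
  have hn : (0:ℝ) ≤ n := Nat.cast_nonneg n
  have hs : IntervalIntegrable (fun u => fAux (u + 1)) volume (-((n:ℝ) + 2)) (n + 2) :=
    (fAux_cont.comp (by fun_prop : Continuous fun u : ℝ => u + 1)).intervalIntegrable _ _
  have e : ∫ u in (-((n:ℝ) + 2))..(n + 2), (fAux u - fAux (u + 1))
      = (∫ u in (-((n:ℝ) + 2))..(-((n:ℝ) + 2) + 1), fAux u) - ∫ u in ((n:ℝ) + 2)..(n + 2 + 1), fAux u := by
    rw [intervalIntegral.integral_sub (hii _ _) hs, intervalIntegral.integral_comp_add_right,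
      ← intervalIntegral.integral_add_adjacent_intervals (hii (-((n:ℝ) + 2)) (-((n:ℝ) + 2) + 1)) (hii _ (n + 2)),
      ← intervalIntegral.integral_add_adjacent_intervals (hii (-((n:ℝ) + 2) + 1) (n + 2)) (hii _ (n + 2 + 1))]
    ring
  simp only [Function.comp]
  rw [e]
  have b1 := intervalIntegral.norm_integral_le_of_norm_le_const (f := fAux) (a := -((n:ℝ) + 2))
    (b := -((n:ℝ) + 2) + 1) (C := 1 / ((n:ℝ) + 1)) (fun x hx => by
      rw [uIoc_of_le (by linarith)] at hx
      refine fAux_bound x _ (by positivity) ?_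
      rw [abs_of_nonpos (by linarith [hx.2])]
      linarith [hx.2])
  have b2 := intervalIntegral.norm_integral_le_of_norm_le_const (f := fAux) (a := ((n:ℝ) + 2))
    (b := ((n:ℝ) + 2) + 1) (C := 1 / ((n:ℝ) + 1)) (fun x hx => by
      rw [uIoc_of_le (by linarith)] at hx
      refine fAux_bound x _ (by positivity) ?_
      rw [abs_of_nonneg (by linarith [hx.1])]
      linarith [hx.1])
  simp only [add_sub_cancel_left, abs_one, mul_one] at b1 b2
  exact (norm_sub_le _ _).trans (by linarith)

/-- kernel whose `x`-integral is `u`. -/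
noncomputable def sAux (x u : ℝ) : ℝ :=
  if 0 ≤ x then (if x < u then 1 else 0) else (if u ≤ x then -1 else 0)

lemma sAux_meas : Measurable (Function.uncurry sAux) := by
  unfold sAux Function.uncurry
  refine Measurable.ite (measurableSet_le measurable_const measurable_fst)
    (Measurable.ite (measurableSet_lt measurable_fst measurable_snd) measurable_const measurable_const)
    (Measurable.ite (measurableSet_le measurable_snd measurable_fst) measurable_const measurable_const)

lemma sAux_eq (u : ℝ) : (fun x => sAux x u) =
    fun x => (Ico 0 u).indicator (fun _ => (1:ℝ)) x - (Ico u 0).indicator (fun _ => (1:ℝ)) x := by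
  ext x
  simp only [sAux, indicator, mem_Ico]
  split_ifs <;> grind

lemma sAux_integrable (u : ℝ) : Integrable (fun x => sAux x u) := by
  rw [sAux_eq]
  exact ((integrable_indicator_iff measurableSet_Ico).2 (by simp)).sub
    ((integrable_indicator_iff measurableSet_Ico).2 (by simp))

lemma sAux_integral (u : ℝ) : ∫ x, sAux x u = u := by
  rw [sAux_eq, integral_sub ((integrable_indicator_iff measurableSet_Ico).2 (by simp))
    ((integrable_indicator_iff measurableSet_Ico).2 (by simp)),
    integral_indicator measurableSet_Ico, integral_indicator measurableSet_Ico]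
  simp only [setIntegral_const, Real.volume_real_Ico, smul_eq_mul, mul_one]
  rcases le_total 0 u with h | h
  · rw [max_eq_left (by linarith), max_eq_right (by linarith)]; ring
  · rw [max_eq_right (by linarith), max_eq_left (by linarith)]; ring

theorem stmt_6
    -- `h` is the continuous extension of `u ↦ sin²(πu)/(π²·u·(u+1)²)`
    (h : ℝ → ℝ) (hc : Continuous h)
    (heq : ∀ u : ℝ, u ≠ 0 → u ≠ -1 →
      h u = Real.sin (π * u) ^ 2 / (π ^ 2 * u * (u + 1) ^ 2))
    (G : ℝ → ℝ) (hG : ∀ x : ℝ, G x = -∫ u in Iic x, h u) :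
    (∀ x : ℝ, heaviside x ≤ G x) ∧ (∫ x : ℝ, (G x - heaviside x)) = 1 := by
  have huh := uh_eq h hc heq
  have hi := h_integrable h hc huh
  have hint : ∫ u, h u = -1 := by
    have hfi : Integrable (fun u => fAux u - fAux (u + 1)) := by
      refine (hi.add integrable_shift).congr (Filter.Eventually.of_forall fun u => ?_)
      simp only [Pi.add_apply]
      rw [h_eq h hc heq u]; ring
    simp_rw [h_eq h hc heq]
    rw [integral_sub hfi integrable_shift, fdiff_integral hfi, integral_shift]
    norm_num
  have hpos : ∀ x u, 0 ≤ sAux x u * h u := by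
    intro x u
    have hu : 0 ≤ u * h u := by rw [huh]; positivity
    unfold sAux
    split_ifs with h1 h2 h2
    · have := nonneg_of_mul_nonneg_right hu (h1.trans_lt h2); linarith
    · simp
    · have : u < 0 := by linarith
      nlinarith
    · simp
  have hGF : ∀ x, G x - heaviside x = ∫ u, sAux x u * h u := by
    intro x
    rw [hG]
    by_cases hx : 0 ≤ x
    · have : (fun u => sAux x u * h u) = (Ioi x).indicator h := by
        ext u; simp [sAux, hx, indicator]
      rw [this, integral_indicator measurableSet_Ioi]
      have := intervalIntegral.integral_Iic_add_Ioi (b := x) hi.integrableOn hi.integrableOn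
      simp only [heaviside, hx, if_true]
      linarith
    · have : (fun u => sAux x u * h u) = (Iic x).indicator (fun u => - h u) := by
        ext u; simp [sAux, hx, indicator]
      rw [this, integral_indicator measurableSet_Iic, integral_neg]
      simp [heaviside, hx]
  have hF : Integrable (Function.uncurry fun x u => sAux x u * h u) (volume.prod volume) := by
    have hm : AEStronglyMeasurable (Function.uncurry fun x u => sAux x u * h u)
        ((volume : Measure ℝ).prod (volume : Measure ℝ)) :=
      (sAux_meas.mul (hc.measurable.comp measurable_snd)).aestronglyMeasurable
    rw [integrable_prod_iff' hm]
    refine ⟨Filter.Eventually.of_forall fun u => (sAux_integrable u).mul_const (h u), ?_⟩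
    refine integrable_shift.congr (Filter.Eventually.of_forall fun u => ?_)
    simp only [Function.uncurry, Real.norm_of_nonneg (hpos _ _)]
    rw [integral_mul_const, sAux_integral, huh]
  refine ⟨fun x => ?_, ?_⟩
  · have := hGF x
    have h2 : 0 ≤ ∫ u, sAux x u * h u := integral_nonneg (hpos x)
    linarith
  · simp_rw [hGF]
    rw [integral_integral_swap hF]
    simp_rw [integral_mul_const, sAux_integral, huh]
    exact integral_shift
end

section
/- The function g(x) = −sin²(πx)/(π²·x·(x+1)²) (extended continuously across x = 0 and x = −1) satisfies ∫_{−∞}^{∞} g(x) dx = 1; equivalently, ∫_{−∞}^{∞} sin²(πu)/(π²·u·(u+1)²) du = −1. -/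
open MeasureTheory Real Set

lemma aux_parseval (x : ℝ) (hx : ∀ n : ℤ, x + n ≠ 0) :
    HasSum (fun n : ℤ => Real.sin (π * x) ^ 2 / (π ^ 2 * (x + n) ^ 2)) 1 := by
  have h01 : (0:ℝ) < 1 := one_pos
  let f : ℝ → ℂ := fun t => Complex.exp ((2 * π * x * Complex.I) * t)
  have hfc : Continuous f := by fun_prop
  have hnorm : ∀ t, ‖f t‖ = 1 := by
    intro t
    have : (2 * π * x * Complex.I) * (t : ℂ) = ((2 * π * x * t : ℝ) : ℂ) * Complex.I := by
      push_cast; ring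
    simp only [f]
    rw [this, Complex.norm_exp_ofReal_mul_I]
  have hL2 : MemLp f 2 (volume.restrict (Ioc 0 1)) := by
    refine MemLp.of_bound hfc.aestronglyMeasurable 1 (Filter.Eventually.of_forall fun t => (hnorm t).le)
  have key := hasSum_sq_fourierCoeffOn h01 hL2
  have hcoef : ∀ n : ℤ, ‖fourierCoeffOn h01 f n‖ ^ 2
      = Real.sin (π * x) ^ 2 / (π ^ 2 * (x + ((-n : ℤ) : ℝ)) ^ 2) := by
    intro n
    have hxn := hx (-n)
    have hxn' : (x : ℂ) - n ≠ 0 := by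
      intro h
      apply hxn
      push_cast
      rw [← sub_eq_add_neg]
      exact_mod_cast h
    have hpi : (π : ℂ) ≠ 0 := by exact_mod_cast Real.pi_ne_zero
    have hc : (2 * π * Complex.I * (x - n) : ℂ) ≠ 0 := by
      simp [hpi, hxn']
    rw [fourierCoeffOn_eq_integral]
    have : ∀ t : ℝ, (fourier (-n) (t : AddCircle (1 - 0 : ℝ)) : ℂ) • f t
        = Complex.exp ((2 * π * Complex.I * (x - n)) * t) := by
      intro t
      rw [fourier_coe_apply, smul_eq_mul]
      simp only [f]
      rw [← Complex.exp_add]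
      congr 1
      push_cast
      ring
    simp only [this]
    rw [integral_exp_mul_complex hc]
    have e1 : Complex.exp (2 * π * Complex.I * (x - n) * ((1:ℝ):ℂ))
       = Complex.exp (Complex.I * ((2 * π * x : ℝ) : ℂ)) := by
      rw [Complex.exp_eq_exp_iff_exists_int]
      exact ⟨-n, by push_cast; ring⟩
    rw [e1]
    simp only [Complex.ofReal_zero, mul_zero, Complex.exp_zero]
    rw [norm_smul, norm_div (Complex.exp _ - 1), Complex.norm_exp_I_mul_ofReal_sub_one]
    have e2 : ‖(2 * π * Complex.I * (x - n) : ℂ)‖ = |2 * π * (x + ((-n : ℤ) : ℝ))| := by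
      have : (2 * π * Complex.I * (x - n) : ℂ) = ((2 * π * (x + ((-n : ℤ) : ℝ)) : ℝ) : ℂ) * Complex.I := by
        push_cast; ring
      rw [this, norm_mul, Complex.norm_I, mul_one, Complex.norm_real, Real.norm_eq_abs]
    rw [e2, Real.norm_eq_abs, Real.norm_eq_abs, mul_pow, div_pow, sq_abs, sq_abs, sq_abs,
      show 2 * π * x / 2 = π * x by ring]
    have := Real.pi_ne_zero
    field_simp
    ring
  simp only [hcoef, hnorm] at key
  have k2 := (Equiv.neg ℤ).hasSum_iff (f := fun n : ℤ => Real.sin (π * x) ^ 2 / (π ^ 2 * (x + n) ^ 2)) (a := 1)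
  apply k2.mp
  simpa [Function.comp_def] using key

lemma aux_tel (x : ℝ) (hx : ∀ n : ℤ, x + n ≠ 0) :
    HasSum (fun n : ℤ => 1 / (x + n) - 1 / (x + n + 1)) 0 := by
  have hx1 : ∀ n : ℤ, x + n + 1 ≠ 0 := fun n => by
    have := hx (n + 1); push_cast at this; rwa [← add_assoc] at this
  have hs : Summable (fun n : ℤ => 1 / (x + n) - 1 / (x + n + 1)) := by
    have := EisensteinSeries.summable_linear_right_add_one_mul_linear_right (x : ℂ) 1 1
    have h2 : Summable fun n : ℤ ↦ ((x + n + 1) * (x + n))⁻¹ := by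
      rw [← Complex.summable_ofReal]
      refine this.congr fun n => ?_
      push_cast; ring
    refine h2.congr fun n => ?_
    have := hx n
    have := hx1 n
    field_simp
    ring
  have h1 : HasSum _ _ (SummationFilter.symmetricIco ℤ) := (hs.hasSum.mono_left (SummationFilter.symmetricIco ℤ).le_atTop)
  rw [SummationFilter.hasSum_symmetricIco_int_iff] at h1
  have h2 : ∀ N : ℕ, ∑ n ∈ Finset.Ico (-(N:ℤ)) N, (1 / (x + n) - 1 / (x + n + 1))
      = 1 / (x - N) - 1 / (x + N) := by
    intro N
    have := Finset.sum_Ico_int_sub N (fun n : ℤ => 1 / (x + n))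
    simpa [sub_eq_add_neg, add_assoc] using this
  have h3 : Filter.Tendsto (fun N : ℕ => 1 / (x - N) - 1 / (x + N)) Filter.atTop (nhds 0) := by
    have a1 : Filter.Tendsto (fun N : ℕ => x + (N : ℝ)) Filter.atTop Filter.atTop :=
      Filter.tendsto_atTop_add_const_left _ _ tendsto_natCast_atTop_atTop
    have a2 : Filter.Tendsto (fun N : ℕ => (N : ℝ) - x) Filter.atTop Filter.atTop :=
      Filter.tendsto_atTop_add_const_right _ _ tendsto_natCast_atTop_atTop
    have := (a2.inv_tendsto_atTop.neg).sub a1.inv_tendsto_atTop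
    simp only [neg_zero, sub_zero] at this
    refine this.congr fun N => ?_
    simp only [Pi.inv_apply, one_div, ← inv_neg, neg_sub]
  simp only [h2] at h1
  rw [← tendsto_nhds_unique h1 h3]
  exact hs.hasSum

theorem stmt_7
    -- `g` is the continuous extension of `x ↦ -sin²(πx)/(π²·x·(x+1)²)`
    (g : ℝ → ℝ) (hc : Continuous g)
    (hgeq : ∀ x : ℝ, x ≠ 0 → x ≠ -1 →
      g x = -(Real.sin (π * x) ^ 2 / (π ^ 2 * x * (x + 1) ^ 2))) :
    Integrable g ∧ (∫ x : ℝ, g x) = 1 := by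
  have hint : Integrable g := by
    obtain ⟨C, hC⟩ := (isCompact_Icc (a := (-2:ℝ)) (b := 2)).exists_bound_of_continuousOn
      hc.continuousOn
    have hC0 : 0 ≤ C := (norm_nonneg _).trans (hC 0 (by norm_num))
    refine (integrable_inv_one_add_sq.const_mul (5 * C + 1)).mono' hc.aestronglyMeasurable
      (Filter.Eventually.of_forall fun x => ?_)
    rw [← div_eq_mul_inv, le_div_iff₀ (by positivity)]
    by_cases hx : x ∈ Icc (-2:ℝ) 2
    · have h5 : 1 + x ^ 2 ≤ 5 := by nlinarith [hx.1, hx.2]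
      have := mul_le_mul (hC x hx) h5 (by positivity) hC0
      linarith
    · have hx2 : 2 < |x| := by
        by_contra! h
        exact hx (abs_le.mp h)
      have hx0 : x ≠ 0 := by rintro rfl; norm_num at hx2
      have hx1 : x ≠ -1 := by rintro rfl; norm_num at hx2
      have hx1' : x + 1 ≠ 0 := fun h => hx1 (by linarith)
      rw [hgeq x hx0 hx1, norm_neg, norm_div, Real.norm_eq_abs, Real.norm_eq_abs, abs_mul, abs_mul,
        abs_of_nonneg (sq_nonneg (Real.sin _)), abs_of_nonneg (sq_nonneg π),
        abs_of_nonneg (sq_nonneg (x + 1)),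
        div_mul_eq_mul_div, div_le_iff₀ (by positivity)]
      have hs : Real.sin (π * x) ^ 2 ≤ 1 := Real.sin_sq_le_one _
      have hp : 4 ≤ π ^ 2 := by nlinarith [Real.pi_gt_three]
      have ha : (|x| - 1) ^ 2 ≤ (x + 1) ^ 2 := by
        nlinarith [neg_abs_le x, sq_abs x]
      have hb : 1 + x ^ 2 ≤ 4 * |x| * (x + 1) ^ 2 := by
        have h1 : |x| ^ 2 / 4 ≤ (|x| - 1) ^ 2 := by nlinarith
        have h2 : x ^ 2 / 4 ≤ (x + 1) ^ 2 := by rw [← sq_abs x]; linarith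
        have h3 : 2 * (x ^ 2 / 4) ≤ |x| * (x + 1) ^ 2 :=
          mul_le_mul hx2.le h2 (by positivity) (by positivity)
        nlinarith [sq_abs x]
      calc Real.sin (π * x) ^ 2 * (1 + x ^ 2) ≤ 1 * (1 + x ^ 2) := by gcongr
        _ ≤ 4 * |x| * (x + 1) ^ 2 := by linarith
        _ ≤ π ^ 2 * |x| * (x + 1) ^ 2 := by gcongr
        _ ≤ (5 * C + 1) * (π ^ 2 * |x| * (x + 1) ^ 2) :=
          le_mul_of_one_le_left (by positivity) (by linarith)
  refine ⟨hint, ?_⟩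
  have hA := hint.hasSum_intervalIntegral_comp_add_int
  have hN := hint.norm.hasSum_intervalIntegral_comp_add_int
  simp only [intervalIntegral.integral_of_le zero_le_one] at hA hN
  have hB := hasSum_integral_of_summable_integral_norm (μ := volume.restrict (Ioc (0:ℝ) 1))
    (F := fun (n : ℤ) x => g (x + n)) (fun n => (hint.comp_add_right (n : ℝ)).restrict) hN.summable
  rw [hA.unique hB]
  have hpt : ∀ x ∈ Ioo (0:ℝ) 1, ∑' n : ℤ, g (x + n) = 1 := by
    intro x hx
    have hxn : ∀ n : ℤ, x + n ≠ 0 := by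
      intro n h
      have h1 : (-1 : ℝ) < n := by linarith [hx.2]
      have h2 : (n : ℝ) < 0 := by linarith [hx.1]
      have h1' : (-1 : ℤ) < n := by exact_mod_cast h1
      have h2' : n < 0 := by exact_mod_cast h2
      omega
    have hx1 : ∀ n : ℤ, x + n + 1 ≠ 0 := fun n => by
      have := hxn (n + 1); push_cast at this; rwa [← add_assoc] at this
    have p1 := (Equiv.addRight (1:ℤ)).hasSum_iff.mpr (aux_parseval x hxn)
    have p2 := (aux_tel x hxn).mul_left (Real.sin (π * x) ^ 2 / π ^ 2)
    have p3 := p1.sub p2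
    rw [mul_zero, sub_zero] at p3
    rw [← p3.tsum_eq]
    refine tsum_congr fun n => ?_
    have hn := hxn n
    have hn1 := hx1 n
    rw [hgeq _ hn (fun h => hn1 (by linarith))]
    have hsin : Real.sin (π * (x + n)) ^ 2 = Real.sin (π * x) ^ 2 := by
      rw [show π * (x + n) = π * x + n * π by ring, Real.sin_add_int_mul_pi, mul_pow,
        ← zpow_natCast, ← zpow_mul, mul_comm n, zpow_mul]
      simp
    rw [hsin]
    simp only [Function.comp, Equiv.coe_addRight, Int.cast_add, Int.cast_one, ← add_assoc]
    have := Real.pi_ne_zero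
    field_simp
    ring
  rw [integral_Ioc_eq_integral_Ioo, setIntegral_congr_fun measurableSet_Ioo hpt]
  simp
end

section
/- Define M(z) = −2·∫ sin²(πs)/(π²·s·(s+1)²) ds − 1 along the path (−∞, 0] followed by the segment from 0 to z (the integrand extended entirely), and set ψ(x) := M(x) − sgn(x) for x ∈ ℝ. Then ψ ∈ L¹(ℝ), its Fourier transform ψ̂(t) = ∫_{−∞}^{∞} ψ(x)·e^{−2πixt} dx satisfies ψ̂(0) = 2, and ψ̂(t) = −1/(π·i·t) for every real t with |t| ≥ 1. -/
open MeasureTheory Real Set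

noncomputable def hat (t : ℝ) : ℂ := ((max 0 (1 - |t|) : ℝ) : ℂ)

noncomputable def fej (w : ℝ) : ℝ := (Real.sin (π * w) / (π * w)) ^ 2

lemma hat_cont : Continuous hat := by unfold hat; fun_prop

lemma hat_zero {t : ℝ} (h : 1 ≤ |t|) : hat t = 0 := by
  unfold hat; rw [max_eq_left (by linarith)]; simp

lemma hat_int : Integrable hat := by
  refine hat_cont.integrable_of_hasCompactSupport ?_
  refine HasCompactSupport.intro (isCompact_Icc (a := (-1:ℝ)) (b := 1)) ?_
  intro x hx
  apply hat_zero
  by_contra h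
  push Not at h
  exact hx ⟨(abs_lt.1 h).1.le, (abs_lt.1 h).2.le⟩

lemma hat_pos {t : ℝ} (h0 : 0 ≤ t) (h : t ≤ 1) : hat t = 1 - t := by
  unfold hat; rw [abs_of_nonneg h0, max_eq_right (by linarith)]; simp

lemma hat_neg {t : ℝ} (h0 : t ≤ 0) (h : -1 ≤ t) : hat t = 1 + t := by
  unfold hat; rw [abs_of_nonpos h0, max_eq_right (by linarith)]; simp

lemma fej_meas : Measurable fej := by unfold fej; fun_prop

lemma fej_bound (w : ℝ) : ‖fej w‖ ≤ 2 * (1 + w ^ 2)⁻¹ := by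
  rw [Real.norm_of_nonneg (by unfold fej; positivity)]
  rw [← div_eq_mul_inv, le_div_iff₀ (by positivity)]
  by_cases hw : w = 0
  · subst hw; simp [fej]
  have hpw : (π * w) ≠ 0 := mul_ne_zero pi_ne_zero hw
  have h1 : fej w ≤ 1 := by
    unfold fej
    rw [div_pow, div_le_one (by positivity)]
    exact sq_le_sq.2 (Real.abs_sin_le_abs)
  have h2 : fej w * w ^ 2 ≤ 1 := by
    have : fej w * w ^ 2 = Real.sin (π * w) ^ 2 / π ^ 2 := by
      unfold fej; field_simp
    rw [this, div_le_one (by positivity)]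
    nlinarith [Real.sin_sq_le_one (π * w), Real.pi_gt_three]
  linarith

lemma fej_int : Integrable fej :=
  (integrable_inv_one_add_sq.const_mul 2).mono' fej_meas.aestronglyMeasurable
    (Filter.Eventually.of_forall fej_bound)

lemma d1 (c : ℂ) (hc : c ≠ 0) (a b : ℂ) (x : ℝ) :
    HasDerivAt (fun t : ℝ => (a + b * t) * Complex.exp (c * t) / c - b * Complex.exp (c * t) / c ^ 2)
      ((a + b * x) * Complex.exp (c * x)) x := by
  have h : HasDerivAt (fun t : ℂ => (a + b * t) * Complex.exp (c * t) / c
      - b * Complex.exp (c * t) / c ^ 2) ((a + b * x) * Complex.exp (c * x)) (x : ℂ) := by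
    have e : HasDerivAt (fun t : ℂ => Complex.exp (c * t)) (Complex.exp (c * x) * (c * 1)) (x : ℂ) :=
      ((hasDerivAt_id (x : ℂ)).const_mul c).cexp
    have l : HasDerivAt (fun t : ℂ => a + b * t) (b * 1) (x : ℂ) :=
      ((hasDerivAt_id (x : ℂ)).const_mul b).const_add a
    refine (((l.mul e).div_const c).sub ((e.const_mul b).div_const (c ^ 2))).congr_deriv ?_
    field_simp
    ring
  exact h.comp_ofReal

lemma i1 (c : ℂ) (hc : c ≠ 0) (a b : ℂ) (x y : ℝ) :
    ∫ t in x..y, (a + b * (t : ℂ)) * Complex.exp (c * t) =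
    ((a + b * y) * Complex.exp (c * y) / c - b * Complex.exp (c * y) / c ^ 2) -
    ((a + b * x) * Complex.exp (c * x) / c - b * Complex.exp (c * x) / c ^ 2) := by
  rw [intervalIntegral.integral_eq_sub_of_hasDerivAt (fun t _ => d1 c hc a b t)]
  apply Continuous.intervalIntegrable
  fun_prop

open scoped FourierTransform

lemma hat_fourier (w : ℝ) (hw : w ≠ 0) : 𝓕 hat w = (fej w : ℂ) := by
  rw [Real.fourier_real_eq_integral_exp_smul]
  set c : ℂ := -2 * π * Complex.I * w with hc
  have hc0 : c ≠ 0 := by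
    simp [hc, hw, pi_ne_zero]
  have e1 : ∀ v : ℝ, Complex.exp (↑(-2 * π * v * w) * Complex.I) • hat v
      = hat v * Complex.exp (c * v) := by
    intro v
    rw [smul_eq_mul, mul_comm, hc]
    congr 2
    push_cast; ring
  simp_rw [e1]
  rw [← setIntegral_eq_integral_of_forall_compl_eq_zero (s := Ioc (-1:ℝ) 1),
    ← intervalIntegral.integral_of_le (by norm_num)]
  swap
  · intro x hx
    rw [hat_zero, zero_mul]
    by_contra h
    push Not at h
    exact hx ⟨(abs_lt.1 h).1, (abs_lt.1 h).2.le⟩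
  have hcont : Continuous (fun v : ℝ => hat v * Complex.exp (c * v)) := by
    have := hat_cont
    fun_prop
  rw [← intervalIntegral.integral_add_adjacent_intervals (b := 0) (hcont.intervalIntegrable _ _)
    (hcont.intervalIntegrable _ _)]
  have a1 : ∫ v in (-1:ℝ)..0, hat v * Complex.exp (c * v)
      = ∫ v in (-1:ℝ)..0, (1 + 1 * (v : ℂ)) * Complex.exp (c * v) := by
    apply intervalIntegral.integral_congr
    intro v hv
    rw [uIcc_of_le (by norm_num)] at hv
    simp only [hat_neg hv.2 hv.1, one_mul]
  have a2 : ∫ v in (0:ℝ)..1, hat v * Complex.exp (c * v)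
      = ∫ v in (0:ℝ)..1, (1 + (-1) * (v : ℂ)) * Complex.exp (c * v) := by
    apply intervalIntegral.integral_congr
    intro v hv
    rw [uIcc_of_le (by norm_num)] at hv
    simp only [hat_pos hv.1 hv.2]
    ring
  rw [a1, a2, i1 c hc0, i1 c hc0]
  unfold fej
  push_cast
  have hsin : Complex.sin (π * w) = (Complex.exp (c / 2) - Complex.exp (- (c / 2))) * Complex.I / 2 := by
    rw [Complex.sin, hc]; congr 3 <;> [congr 1; congr 1] <;> ring
  have h2 : Complex.exp c = Complex.exp (c / 2) ^ 2 := by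
    rw [← Complex.exp_nat_mul]; congr 1; push_cast; ring
  have h3 : Complex.exp (-c) = Complex.exp (-(c / 2)) ^ 2 := by
    rw [← Complex.exp_nat_mul]; congr 1; push_cast; ring
  have h4 : Complex.exp (c / 2) * Complex.exp (-(c / 2)) = 1 := by
    rw [← Complex.exp_add]; simp
  have hcc : ((π : ℂ) * w) = c * Complex.I / 2 := by
    rw [hc]; ring_nf; simp
  have e5 : ((Complex.exp (c / 2) - Complex.exp (- (c / 2))) * Complex.I / 2 / (c * Complex.I / 2)) 
     = (Complex.exp (c / 2) - Complex.exp (- (c / 2))) / c := by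
    field_simp
  rw [hsin, hcc, e5]
  simp only [mul_zero, Complex.exp_zero, mul_one, mul_neg, h2, h3]
  field_simp
  linear_combination 2 * h4

lemma hat_fourier_ae : 𝓕 hat =ᵐ[volume] fun w => (fej w : ℂ) := by
  filter_upwards [Measure.ae_ne volume (0:ℝ)] with w hw using hat_fourier w hw

lemma fej_fourier (t : ℝ) :
    ∫ w : ℝ, (fej w : ℂ) * Complex.exp (2 * π * Complex.I * w * t) = hat t := by
  have h := hat_cont.fourierInv_fourier_eq hat_int
    ((integrable_congr hat_fourier_ae).2 fej_int.ofReal)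
  rw [← congrFun h t, Real.fourierInv_eq']
  apply integral_congr_ae
  filter_upwards [hat_fourier_ae] with w hw
  rw [hw, smul_eq_mul, mul_comm]
  congr 2
  simp
  ring

def IsG (g : ℂ → ℂ) : Prop := Differentiable ℂ g ∧ ∀ s : ℂ, s ≠ 0 → s ≠ -1 →
      g s = Complex.sin ((π : ℂ) * s) ^ 2 / ((π : ℂ) ^ 2 * s * (s + 1) ^ 2)

lemma g_cont {g : ℂ → ℂ} (h : IsG g) : Continuous (fun u : ℝ => g u) :=
  h.1.continuous.comp Complex.continuous_ofReal

lemma ug_ae {g : ℂ → ℂ} (h : IsG g) :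
    (fun u : ℝ => (u : ℂ) * g u) =ᵐ[volume] fun u => (fej (u + 1) : ℂ) := by
  filter_upwards [Measure.ae_ne volume (0:ℝ), Measure.ae_ne volume (-1:ℝ)] with u h0 h1
  have h0' : (u : ℂ) ≠ 0 := by exact_mod_cast h0
  have h1' : (u : ℂ) ≠ -1 := by exact_mod_cast h1
  have h2 : (u : ℂ) + 1 ≠ 0 := fun hh => h1' (eq_neg_of_add_eq_zero_left hh)
  have hp : (π : ℂ) ≠ 0 := by exact_mod_cast pi_ne_zero
  rw [h.2 _ h0' h1']
  unfold fej
  push_cast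
  rw [mul_add, mul_one, Complex.sin_add_pi, ← mul_add_one]
  field_simp

lemma ug_int {g : ℂ → ℂ} (h : IsG g) : Integrable (fun u : ℝ => (u : ℂ) * g u) :=
  (integrable_congr (ug_ae h)).2 (fej_int.comp_add_right 1).ofReal

lemma g_int {g : ℂ → ℂ} (h : IsG g) : Integrable (fun u : ℝ => g u) := by
  have h1 : Integrable ((Icc (-1:ℝ) 1).indicator (fun u : ℝ => g u)) :=
    (integrable_indicator_iff measurableSet_Icc).2
      ((g_cont h).continuousOn.integrableOn_compact isCompact_Icc)
  refine (h1.norm.add (ug_int h).norm).mono' (g_cont h).aestronglyMeasurable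
    (Filter.Eventually.of_forall fun u => ?_)
  simp only [Pi.add_apply]
  by_cases hu : u ∈ Icc (-1:ℝ) 1
  · rw [indicator_of_mem hu]
    have := norm_nonneg ((u:ℂ) * g u)
    linarith
  · rw [indicator_of_notMem hu, norm_zero, zero_add, norm_mul]
    have : 1 ≤ ‖(u:ℂ)‖ := by
      rw [Complex.norm_real, Real.norm_eq_abs]
      by_contra hh
      push Not at hh
      exact hu ⟨(abs_lt.1 hh).1.le, (abs_lt.1 hh).2.le⟩
    nlinarith [norm_nonneg (g u)]

lemma hat_even (t : ℝ) : hat (-t) = hat t := by unfold hat; rw [abs_neg]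

lemma ug_fourier {g : ℂ → ℂ} (h : IsG g) (t : ℝ) :
    ∫ u : ℝ, (u : ℂ) * g u * Complex.exp (-2 * π * Complex.I * u * t)
      = Complex.exp (2 * π * Complex.I * t) * hat t := by
  have e1 : ∫ u : ℝ, (u : ℂ) * g u * Complex.exp (-2 * π * Complex.I * u * t)
      = ∫ u : ℝ, (fun v : ℝ => Complex.exp (2 * π * Complex.I * t) *
          ((fej v : ℂ) * Complex.exp (2 * π * Complex.I * v * (-t : ℝ)))) (u + 1) := by
    apply integral_congr_ae
    filter_upwards [ug_ae h] with u hu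
    rw [hu]
    rw [mul_left_comm, ← Complex.exp_add]
    congr 2
    push_cast; ring
  rw [e1, integral_add_right_eq_self
    (fun v : ℝ => Complex.exp (2 * π * Complex.I * t) *
          ((fej v : ℂ) * Complex.exp (2 * π * Complex.I * v * (-t : ℝ)))) 1,
    integral_const_mul, fej_fourier, hat_even]

lemma F_eq (g : ℂ → ℂ) (t : ℝ) : 𝓕 (fun u : ℝ => g u) t =
    ∫ u : ℝ, g u * Complex.exp (-2 * π * Complex.I * u * t) := by
  rw [Real.fourier_real_eq_integral_exp_smul]
  congr 1; ext u
  rw [smul_eq_mul, mul_comm]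
  congr 2
  push_cast; ring

lemma F_deriv {g : ℂ → ℂ} (h : IsG g) (t : ℝ) :
    HasDerivAt (𝓕 (fun u : ℝ => g u))
      (-2 * π * Complex.I * (Complex.exp (2 * π * Complex.I * t) * hat t)) t := by
  have := Real.hasDerivAt_fourier (g_int h) (by simpa using ug_int h) t
  refine this.congr_deriv ?_
  rw [← ug_fourier h, ← integral_const_mul, Real.fourier_real_eq_integral_exp_smul]
  congr 1; ext u
  simp only [smul_eq_mul]
  rw [mul_comm (Complex.exp _), ← mul_assoc, ← mul_assoc]
  congr 2
  push_cast; ring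

lemma F_diff {g : ℂ → ℂ} (h : IsG g) (a b : ℝ) :
    𝓕 (fun u : ℝ => g u) b - 𝓕 (fun u : ℝ => g u) a = 
     ∫ t in a..b, -2 * π * Complex.I * (Complex.exp (2 * π * Complex.I * t) * hat t) := by
  rw [intervalIntegral.integral_eq_sub_of_hasDerivAt (fun t _ => F_deriv h t)]
  apply Continuous.intervalIntegrable
  have := hat_cont
  fun_prop

lemma F_const {g : ℂ → ℂ} (h : IsG g) (a b : ℝ) (hab : ∀ t ∈ uIcc a b, 1 ≤ |t|) :
    𝓕 (fun u : ℝ => g u) b = 𝓕 (fun u : ℝ => g u) a := by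
  rw [← sub_eq_zero, F_diff h, intervalIntegral.integral_congr (g := fun _ => 0)]
  · simp
  · intro t ht
    simp [hat_zero (hab t ht)]

lemma F_zero {g : ℂ → ℂ} (h : IsG g) (t : ℝ) (ht : 1 ≤ |t|) : 𝓕 (fun u : ℝ => g u) t = 0 := by
  have hz := Real.zero_at_infty_fourier (fun u : ℝ => g u)
  rcases le_abs'.1 ht with h1 | h1
  · refine tendsto_nhds_unique (tendsto_const_nhds.congr' ?_) (hz.mono_left atBot_le_cocompact)
    filter_upwards [Filter.eventually_le_atBot t] with T hT
    refine F_const h _ _ fun x hx => ?_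
    rw [uIcc_of_le hT] at hx
    rw [le_abs]; right; linarith [hx.2]
  · refine tendsto_nhds_unique (tendsto_const_nhds.congr' ?_) (hz.mono_left atTop_le_cocompact)
    filter_upwards [Filter.eventually_ge_atTop t] with T hT
    refine F_const h _ _ fun x hx => ?_
    rw [uIcc_of_ge hT] at hx
    rw [le_abs]; left; linarith [hx.1]

lemma F_at_zero {g : ℂ → ℂ} (h : IsG g) : 𝓕 (fun u : ℝ => g u) 0 = -1 := by
  have h1 := F_diff h (-1) 0
  have hc : (2 * π * Complex.I : ℂ) ≠ 0 := by simp [pi_ne_zero]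
  rw [F_zero h (-1) (by simp), sub_zero, intervalIntegral.integral_const_mul] at h1
  have a1 : ∫ v in (-1:ℝ)..0, Complex.exp (2 * π * Complex.I * v) * hat v
      = ∫ v in (-1:ℝ)..0, (1 + 1 * (v : ℂ)) * Complex.exp ((2 * π * Complex.I) * v) := by
    apply intervalIntegral.integral_congr
    intro v hv
    rw [uIcc_of_le (by norm_num)] at hv
    simp only [hat_neg hv.2 hv.1]
    ring
  rw [a1, i1 _ hc] at h1
  rw [h1]
  have : Complex.exp (2 * π * Complex.I * ((-1 : ℝ) : ℂ)) = 1 := by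
    push_cast
    rw [mul_neg_one, Complex.exp_neg, Complex.exp_two_pi_mul_I, inv_one]
  rw [this]
  push_cast
  simp only [mul_zero, Complex.exp_zero, add_zero]
  field_simp
  ring

lemma g_integral {g : ℂ → ℂ} (h : IsG g) : ∫ u : ℝ, g u = -1 := by
  have := F_at_zero h
  rw [F_eq] at this
  simpa using this

noncomputable def ker (u x : ℝ) : ℂ :=
  (Ioc 0 u).indicator 1 x - (Ioc u 0).indicator 1 x

lemma ker_mul_integral (u : ℝ) (f : ℝ → ℂ) (hf : Continuous f) :
    ∫ x, ker u x * f x = ∫ x in (0:ℝ)..u, f x := by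
  have e : ∀ x, ker u x * f x = (Ioc 0 u).indicator f x - (Ioc u 0).indicator f x := by
    intro x
    unfold ker indicator
    split_ifs <;> simp
  simp_rw [e]
  rw [integral_sub, integral_indicator measurableSet_Ioc, integral_indicator measurableSet_Ioc,
    intervalIntegral]
  · exact (integrable_indicator_iff measurableSet_Ioc).2 (hf.integrableOn_Ioc)
  · exact (integrable_indicator_iff measurableSet_Ioc).2 (hf.integrableOn_Ioc)

lemma ker_norm (u x : ℝ) : ‖ker u x‖ = (uIoc 0 u).indicator 1 x := by
  unfold ker
  rcases le_total 0 u with hu | hu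
  · rw [uIoc_of_le hu, show Ioc u 0 = ∅ from Ioc_eq_empty hu.not_gt]
    unfold indicator; split_ifs <;> simp_all
  · rw [uIoc_of_ge hu, show Ioc 0 u = ∅ from Ioc_eq_empty hu.not_gt]
    unfold indicator; split_ifs <;> simp_all

lemma ker_norm_int (u : ℝ) : ∫ x, ‖ker u x‖ = |u| := by
  simp_rw [ker_norm]
  rw [integral_indicator measurableSet_uIoc]
  simp [uIoc, Measure.real, Real.volume_Ioc, max_sub_min_eq_abs]

lemma ker_meas : Measurable (fun p : ℝ × ℝ => ker p.2 p.1) := by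
  have e : (fun p : ℝ × ℝ => ker p.2 p.1) = fun p =>
      ({p : ℝ × ℝ | 0 < p.1 ∧ p.1 ≤ p.2}.indicator (fun _ => (1:ℂ)) p)
      - ({p : ℝ × ℝ | p.2 < p.1 ∧ p.1 ≤ 0}.indicator (fun _ => (1:ℂ)) p) := by
    ext p
    simp [ker, indicator]
  rw [e]
  refine (measurable_const.indicator ?_).sub (measurable_const.indicator ?_)
  · exact (measurableSet_lt measurable_const measurable_fst).inter
      (measurableSet_le measurable_fst measurable_snd)
  · exact (measurableSet_lt measurable_snd measurable_fst).inter
      (measurableSet_le measurable_fst measurable_const)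

lemma K_int {g : ℂ → ℂ} (h : IsG g) (e : ℝ → ℂ) (he : Continuous e) (hn : ∀ x, ‖e x‖ = 1) :
    Integrable (fun p : ℝ × ℝ => ker p.2 p.1 * e p.1 * g (p.2 : ℝ)) (volume.prod volume) := by
  have hm : Measurable (fun p : ℝ × ℝ => ker p.2 p.1 * e p.1 * g (p.2 : ℝ)) :=
    (ker_meas.mul (he.measurable.comp measurable_fst)).mul
      ((g_cont h).measurable.comp measurable_snd)
  rw [integrable_prod_iff' hm.aestronglyMeasurable]
  constructor
  · refine Filter.Eventually.of_forall fun u => ?_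
    refine Integrable.mono' (g := fun x => (uIoc 0 u).indicator 1 x * ‖g u‖) ?_
      (hm.comp measurable_prodMk_right).aestronglyMeasurable
      (Filter.Eventually.of_forall fun x => ?_)
    · refine Integrable.mul_const ?_ _
      rw [integrable_indicator_iff measurableSet_uIoc]
      exact (continuous_const (y := (1:ℝ))).integrableOn_uIoc
    · simp only [norm_mul, ker_norm, hn, mul_one]
      exact le_rfl
  · have : (fun u : ℝ => ∫ x : ℝ, ‖ker u x * e x * g u‖) = fun u : ℝ => ‖(u : ℂ) * g u‖ := by
      ext u
      simp only [norm_mul, hn, mul_one]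
      rw [integral_mul_const, ker_norm_int, Complex.norm_real, Real.norm_eq_abs]
    simp only [this]
    exact (ug_int h).norm

lemma ker_pos {x : ℝ} (hx : 0 < x) (u : ℝ) : ker u x = (Ici x).indicator 1 u := by
  simp [ker, indicator, hx, hx.not_ge]

lemma ker_neg {x : ℝ} (hx : x < 0) (u : ℝ) : ker u x = - (Iio x).indicator 1 u := by
  simp [ker, indicator, hx.le, hx.le.not_gt]

lemma psi_ae {g : ℂ → ℂ} (h : IsG g) (M : ℂ → ℂ)
    (hM : ∀ z : ℂ, M z =
      -2 * ((∫ u in Iic (0 : ℝ), g (u : ℂ)) + ∫ t in (0:ℝ)..1, z * g ((t : ℂ) * z)) - 1)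
    (ψ : ℝ → ℂ)
    (hψ : ∀ x : ℝ, ψ x = M x - (Real.sign x : ℂ)) (x : ℝ) (hx : x ≠ 0) :
    ψ x = 2 * ∫ u : ℝ, ker u x * g u := by
  have gi := g_int h
  have e1 : (∫ t in (0:ℝ)..1, (x:ℂ) * g ((t : ℂ) * x)) = ∫ u in (0:ℝ)..x, g u := by
    have := intervalIntegral.smul_integral_comp_mul_right (a := 0) (b := 1) (fun u : ℝ => g u) x
    rw [zero_mul, one_mul] at this
    rw [← this, intervalIntegral.integral_const_mul]
    simp
  have e2 := intervalIntegral.integral_Iic_sub_Iic (a := 0) (b := x) (f := fun u : ℝ => g u)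
    (μ := volume) gi.integrableOn gi.integrableOn
  have e3 : M x = -2 * (∫ u in Iic x, g (u : ℝ)) - 1 := by
    rw [hM, e1, ← e2]; ring
  rw [hψ, e3]
  rcases lt_or_gt_of_ne hx with h0 | h0
  · rw [Real.sign_of_neg h0]
    have : ∀ u : ℝ, ker u x * g u = - (Iio x).indicator (fun u : ℝ => g u) u := by
      intro u; rw [ker_neg h0]; unfold indicator; split_ifs <;> simp
    simp_rw [this]
    rw [integral_neg, integral_indicator measurableSet_Iio, integral_Iic_eq_integral_Iio]
    push_cast; ring
  · rw [Real.sign_of_pos h0]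
    have : ∀ u : ℝ, ker u x * g u = (Ici x).indicator (fun u : ℝ => g u) u := by
      intro u; rw [ker_pos h0]; unfold indicator; split_ifs <;> simp
    simp_rw [this]
    rw [integral_indicator measurableSet_Ici]
    have h5 := integral_add_compl (measurableSet_Iic (a := x)) gi
    rw [compl_Iic, g_integral h, ← integral_Ici_eq_integral_Ioi] at h5
    push_cast
    linear_combination -2 * h5

lemma psi_fourier {g : ℂ → ℂ} (h : IsG g) (M : ℂ → ℂ)
    (hM : ∀ z : ℂ, M z =
      -2 * ((∫ u in Iic (0 : ℝ), g (u : ℂ)) + ∫ t in (0:ℝ)..1, z * g ((t : ℂ) * z)) - 1)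
    (ψ : ℝ → ℂ)
    (hψ : ∀ x : ℝ, ψ x = M x - (Real.sign x : ℂ)) 
    (e : ℝ → ℂ) (he : Continuous e) (hn : ∀ x, ‖e x‖ = 1) :
    Integrable (fun x => ψ x * e x) ∧
      ∫ x, ψ x * e x = 2 * ∫ u : ℝ, (∫ x in (0:ℝ)..u, e x) * g u := by
  have hK := K_int h e he hn
  have hae : (fun x => ψ x * e x) =ᵐ[volume]
      fun x => 2 * ∫ u : ℝ, ker u x * e x * g u := by
    filter_upwards [Measure.ae_ne volume (0:ℝ)] with x hx
    rw [psi_ae h M hM ψ hψ x hx, mul_assoc, ← integral_mul_const]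
    congr 2; ext u; ring
  refine ⟨(integrable_congr hae).2 (hK.integral_prod_left.const_mul 2), ?_⟩
  rw [integral_congr_ae hae, integral_const_mul]
  congr 1
  rw [integral_integral_swap (f := fun x u : ℝ => ker u x * e x * g u) hK]
  congr 1; ext u
  rw [integral_mul_const, ker_mul_integral u e he]

theorem stmt_11
    -- `g` is the entire extension of `s ↦ sin²(πs)/(π²·s·(s+1)²)`
    (g : ℂ → ℂ) (hg : Differentiable ℂ g)
    (hgeq : ∀ s : ℂ, s ≠ 0 → s ≠ -1 →
      g s = Complex.sin ((π : ℂ) * s) ^ 2 / ((π : ℂ) ^ 2 * s * (s + 1) ^ 2))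
    -- `M z = -2·(∫_{-∞}^0 g + ∫_{[0,z]} g) - 1`, the segment integral parametrized
    (M : ℂ → ℂ)
    (hM : ∀ z : ℂ, M z =
      -2 * ((∫ u in Iic (0 : ℝ), g (u : ℂ)) + ∫ t in (0:ℝ)..1, z * g ((t : ℂ) * z)) - 1)
    -- `ψ(x) = M(x) - sgn(x)` for real `x`
    (ψ : ℝ → ℂ)
    (hψ : ∀ x : ℝ, ψ x = M x - (Real.sign x : ℂ)) :
    Integrable ψ ∧
      (∫ x : ℝ, ψ x * Complex.exp (-2 * (π : ℂ) * Complex.I * x * 0)) = 2 ∧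
      (∀ t : ℝ, 1 ≤ |t| →
        (∫ x : ℝ, ψ x * Complex.exp (-2 * (π : ℂ) * Complex.I * x * t))
          = -1 / ((π : ℂ) * Complex.I * t)) := by
  have h : IsG g := ⟨hg, hgeq⟩
  have h1 := psi_fourier h M hM ψ hψ (fun _ => 1) continuous_const (by simp)
  refine ⟨by simpa using h1.1, ?_, ?_⟩
  · have h2 := h1.2
    have h3 := ug_fourier h 0
    have h4 : hat 0 = 1 := by simp [hat]
    simp only [Complex.ofReal_zero, mul_zero, Complex.exp_zero, mul_one, h4] at h3
    simp only [mul_zero, Complex.exp_zero]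
    rw [h2]
    simp only [intervalIntegral.integral_const, sub_zero, Complex.real_smul, mul_one, h3]
  · intro t ht
    have ht0 : t ≠ 0 := by rintro rfl; norm_num at ht
    have htc : (t : ℂ) ≠ 0 := by exact_mod_cast ht0
    have hp : (π : ℂ) ≠ 0 := by exact_mod_cast pi_ne_zero
    set c : ℂ := -2 * π * Complex.I * t with hc
    have hc0 : c ≠ 0 := by simp [hc, ht0, pi_ne_zero]
    have h2 := (psi_fourier h M hM ψ hψ
      (fun x : ℝ => Complex.exp (-2 * (π : ℂ) * Complex.I * x * t)) (by fun_prop) (by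
        intro x
        rw [Complex.norm_exp]; simp)).2
    rw [h2]
    have h3 : ∀ u : ℝ, ∫ x in (0:ℝ)..u, Complex.exp (-2 * (π : ℂ) * Complex.I * x * t)
        = (Complex.exp (-2 * (π : ℂ) * Complex.I * u * t) - 1) / c := by
      intro u
      have e : ∀ x : ℝ, -2 * (π : ℂ) * Complex.I * x * t = c * x := by intro x; rw [hc]; ring
      simp_rw [e]
      rw [integral_exp_mul_complex hc0]
      simp
    have h4 : ∀ u : ℝ, (Complex.exp (-2 * (π : ℂ) * Complex.I * u * t) - 1) / c * g u
        = c⁻¹ * (g u * Complex.exp (-2 * (π : ℂ) * Complex.I * u * t) - g u) := by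
      intro u; ring
    simp_rw [h3, h4]
    rw [integral_const_mul, integral_sub _ (g_int h), ← F_eq, F_zero h t ht, g_integral h, hc]
    · field_simp
      ring
    · refine (g_int h).norm.mono' ?_ (Filter.Eventually.of_forall fun u => ?_)
      · have := g_cont h
        exact (this.mul (by fun_prop)).aestronglyMeasurable
      · rw [norm_mul, Complex.norm_exp]; simp
end
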